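/- Let F be an algebraically closed field with characteristic ≠ 2. Then the automorphism group of the algebra E4 with MSC [[1,0,0,1],[0,0,0,0]] is Aut(E4) = { I, [[1,0],[0,-1]] }. -/

import Mathlib

open Matrix Kronecker

variable {F : Type*}

/-- The Kronecker (tensor) product of two `2 × 2` matrices, realized as a `4 × 4` matrix;
rows/columns are indexed in row-major order by the pairs `(1,1), (1,2), (2,1), (2,2)`. -/
def kron [CommRing F] (g h : Matrix (Fin 2) (Fin 2) F) : Matrix (Fin 4) (Fin 4) F :=
  Matrix.reindex finProdFinEquiv finProdFinEquiv (g ⊗ₖ h)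

/-- Two `2`-dimensional algebras given by matrices of structure constants `A, B`
are isomorphic iff `B = g · A · (g⁻¹ ⊗ g⁻¹)` for some `g ∈ GL(2, F)`. -/
def Isomorphic [Field F] (A B : Matrix (Fin 2) (Fin 4) F) : Prop :=
  ∃ g : GL (Fin 2) F,
    B = (g : Matrix (Fin 2) (Fin 2) F) * A *
        kron ((↑(g⁻¹) : Matrix (Fin 2) (Fin 2) F)) ((↑(g⁻¹) : Matrix (Fin 2) (Fin 2) F))

/-- The automorphism group of the algebra with MSC `E`, as a set of (invertible) `2 × 2`
matrices: `Aut(E) = {g ∈ GL(2,F) : g·E = E·(g ⊗ g)}`. -/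
def Aut [Field F] (E : Matrix (Fin 2) (Fin 4) F) : Set (Matrix (Fin 2) (Fin 2) F) :=
  {g | IsUnit g ∧ g * E = E * kron g g}

/-- The derivation algebra of the algebra with MSC `E`:
`Der(E) = { D : E·(D ⊗ I + I ⊗ D) = D·E }`. -/
def Der [Field F] (E : Matrix (Fin 2) (Fin 4) F) : Set (Matrix (Fin 2) (Fin 2) F) :=
  {D | E * (kron D 1 + kron 1 D) = D * E}

/-!
The product of `E4` is `x · y = (xᵀ y) e₁`. For a product of the form `x · y = (xᵀ B y) w`, an
automorphism `g` satisfies `g w = c w` and `gᵀ B g = c B` for one and the same scalar `c`.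
Evaluating `B` at `g w` in both ways gives `c² = c` as soon as `wᵀ B w ≠ 0`, hence `c = 1`. So the
automorphisms of `E4` are the orthogonal matrices fixing `e₁`.
-/

/-- The matrix of structure constants of the algebra with product `x · y = (xᵀ B y) w`, whose
products all lie on the line through `w`. As `Matrix.vec` stacks columns, the transpose is needed
to list the entries of `B` in the row-major order used by `kron`. -/
def rankOneMSC [CommRing F] (w : Fin 2 → F) (B : Matrix (Fin 2) (Fin 2) F) :
    Matrix (Fin 2) (Fin 4) F :=
  reindex (Equiv.refl _) finProdFinEquiv (vecMulVec w (vec Bᵀ))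

theorem vecMulVec_eq_vecMulVec_iff_exists_smul {m n : Type*} [Field F] {w w' : m → F}
    {v v' : n → F} (hw : w ≠ 0) (hv : v ≠ 0) :
    vecMulVec w' v = vecMulVec w v' ↔ ∃ c : F, w' = c • w ∧ v' = c • v := by
  constructor
  · intro h
    obtain ⟨i₀, hi₀⟩ := Function.ne_iff.mp hw
    obtain ⟨j₀, hj₀⟩ := Function.ne_iff.mp hv
    have entry_eq (i : m) (j : n) : w' i * v j = w i * v' j := congr_fun₂ h i j
    have hw' : w' = (v' j₀ / v j₀) • w := by
      ext i
      rw [Pi.smul_apply, smul_eq_mul, div_mul_eq_mul_div, eq_div_iff hj₀, entry_eq, mul_comm]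
    refine ⟨v' j₀ / v j₀, hw', ?_⟩
    ext j
    apply mul_left_cancel₀ hi₀
    rw [← entry_eq, hw', Pi.smul_apply, Pi.smul_apply, smul_eq_mul, smul_eq_mul]
    ring
  · rintro ⟨c, rfl, rfl⟩
    rw [smul_vecMulVec, vecMulVec_smul]

theorem rankOneMSC_eq_rankOneMSC_iff_exists_smul [Field F] {w w' : Fin 2 → F}
    {B B' : Matrix (Fin 2) (Fin 2) F} (hw : w ≠ 0) (hB : B ≠ 0) :
    rankOneMSC w' B = rankOneMSC w B' ↔ ∃ c : F, w' = c • w ∧ B' = c • B := by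
  have hvec : vec Bᵀ ≠ 0 := by rwa [Ne, vec_eq_zero_iff, transpose_eq_zero]
  rw [rankOneMSC, rankOneMSC, (reindex _ _).injective.eq_iff,
    vecMulVec_eq_vecMulVec_iff_exists_smul hw hvec]
  simp only [← vec_smul, vec_inj, ← transpose_smul, transpose_inj]

section Mul

variable [CommRing F] (g h : Matrix (Fin 2) (Fin 2) F) (w : Fin 2 → F)
  (B : Matrix (Fin 2) (Fin 2) F)

theorem rankOneMSC_apply (i j k : Fin 2) :
    rankOneMSC w B i (finProdFinEquiv (j, k)) = w i * B j k := by
  rw [rankOneMSC, reindex_apply, submatrix_apply, Equiv.symm_apply_apply]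
  rfl

theorem mul_rankOneMSC : g * rankOneMSC w B = rankOneMSC (g *ᵥ w) B := by
  rw [rankOneMSC, rankOneMSC, ← mul_vecMulVec]
  rfl

theorem rankOneMSC_mul_kron : rankOneMSC w B * kron g h = rankOneMSC w (gᵀ * B * h) := by
  simp only [rankOneMSC, kron, reindex_apply, submatrix_mul_equiv, vecMulVec_mul,
    vec_vecMul_kronecker, transpose_mul, transpose_transpose, Matrix.mul_assoc]

end Mul

theorem mem_aut_rankOneMSC_iff_exists_smul [Field F] {g : Matrix (Fin 2) (Fin 2) F}
    {w : Fin 2 → F} {B : Matrix (Fin 2) (Fin 2) F} (hw : w ≠ 0) (hB : B ≠ 0) :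
    g ∈ Aut (rankOneMSC w B) ↔ IsUnit g ∧ ∃ c : F, g *ᵥ w = c • w ∧ gᵀ * B * g = c • B := by
  rw [Aut, Set.mem_ofPred_eq, mul_rankOneMSC, rankOneMSC_mul_kron,
    rankOneMSC_eq_rankOneMSC_iff_exists_smul hw hB]

theorem eq_one_of_mulVec_eq_smul_of_transpose_mul_mul_eq_smul {n R : Type*} [Fintype n]
    [DecidableEq n] [CommRing R] [NoZeroDivisors R] {g B : Matrix n n R} {w : n → R} {c : R}
    (hg : IsUnit g) (hwB : w ⬝ᵥ B *ᵥ w ≠ 0) (hgw : g *ᵥ w = c • w)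
    (hgB : gᵀ * B * g = c • B) : c = 1 := by
  have hc : c ≠ 0 := by
    rintro rfl
    rw [zero_smul] at hgw
    obtain rfl : w = 0 := mulVec_injective_of_isUnit hg (hgw.trans (mulVec_zero g).symm)
    exact hwB (zero_dotProduct _)
  refine (mul_eq_right₀ (mul_ne_zero hc hwB)).mp ?_
  calc
    c * (c * (w ⬝ᵥ B *ᵥ w)) = (g *ᵥ w) ⬝ᵥ B *ᵥ (g *ᵥ w) := by
      rw [hgw, mulVec_smul, smul_dotProduct, dotProduct_smul, smul_eq_mul, smul_eq_mul]
    _ = w ⬝ᵥ (gᵀ * B * g) *ᵥ w := by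
      rw [← mulVec_mulVec, ← mulVec_mulVec, dotProduct_mulVec w gᵀ, vecMul_transpose]
    _ = c * (w ⬝ᵥ B *ᵥ w) := by rw [hgB, smul_mulVec, dotProduct_smul, smul_eq_mul]

theorem mem_aut_rankOneMSC_iff [Field F] {g : Matrix (Fin 2) (Fin 2) F} {w : Fin 2 → F}
    {B : Matrix (Fin 2) (Fin 2) F} (hwB : w ⬝ᵥ B *ᵥ w ≠ 0) :
    g ∈ Aut (rankOneMSC w B) ↔ IsUnit g ∧ g *ᵥ w = w ∧ gᵀ * B * g = B := by
  have hw : w ≠ 0 := by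
    rintro rfl
    exact hwB (zero_dotProduct _)
  have hB : B ≠ 0 := by
    rintro rfl
    exact hwB (by rw [zero_mulVec, dotProduct_zero])
  rw [mem_aut_rankOneMSC_iff_exists_smul hw hB]
  refine and_congr_right fun hg => ⟨?_, fun h => ⟨1, by simpa only [one_smul] using h⟩⟩
  rintro ⟨c, hgw, hgB⟩
  obtain rfl := eq_one_of_mulVec_eq_smul_of_transpose_mul_mul_eq_smul hg hwB hgw hgB
  exact ⟨by rwa [one_smul] at hgw, by rwa [one_smul] at hgB⟩

theorem mulVec_eq_self_and_transpose_mul_self_eq_one_iff_fin_two {R : Type*} [CommRing R]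
    [NoZeroDivisors R] {g : Matrix (Fin 2) (Fin 2) R} :
    g *ᵥ ![1, 0] = ![1, 0] ∧ gᵀ * g = 1 ↔ g = 1 ∨ g = !![1, 0; 0, -1] := by
  constructor
  · rintro ⟨hfix, horth⟩
    have h₀₀ : g 0 0 = 1 := by simpa using congr_fun hfix 0
    have h₁₀ : g 1 0 = 0 := by simpa using congr_fun hfix 1
    have h₀₁ : g 0 1 = 0 := by
      simpa [mul_apply, h₀₀, h₁₀] using congr_fun₂ horth 0 1
    have h₁₁ : g 1 1 * g 1 1 = 1 := by
      simpa [mul_apply, h₀₁] using congr_fun₂ horth 1 1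
    rw [eta_fin_two g, h₀₀, h₀₁, h₁₀, one_fin_two]
    exact (mul_self_eq_one_iff.mp h₁₁).imp (fun h => by rw [h]) (fun h => by rw [h])
  · rintro (rfl | rfl)
    · simp
    · constructor
      · ext i
        fin_cases i <;> simp
      · ext i j
        fin_cases i <;> fin_cases j <;> simp [mul_apply]

theorem rankOneMSC_one [CommRing F] :
    rankOneMSC ![1, 0] (1 : Matrix (Fin 2) (Fin 2) F) = !![1, 0, 0, 1; 0, 0, 0, 0] := by
  ext i p
  obtain ⟨⟨j, k⟩, rfl⟩ := (finProdFinEquiv (m := 2) (n := 2)).surjective p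
  rw [rankOneMSC_apply]
  fin_cases i <;> fin_cases j <;> fin_cases k <;> simp [finProdFinEquiv]

theorem aut_E4_general (F : Type*) [Field F] :
    Aut (!![1, 0, 0, 1; 0, 0, 0, 0] : Matrix (Fin 2) (Fin 4) F) =
      {1, !![1, 0; 0, -1]} := by
  have hdot : (![1, 0] : Fin 2 → F) ⬝ᵥ (1 : Matrix (Fin 2) (Fin 2) F) *ᵥ ![1, 0] ≠ 0 := by simp
  ext g
  have isUnit_of_orthogonal (h : gᵀ * g = 1) : IsUnit g := IsUnit.of_mul_eq_one_right _ h
  rw [← rankOneMSC_one, mem_aut_rankOneMSC_iff hdot, Matrix.mul_one,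
    and_iff_right_of_imp fun h => isUnit_of_orthogonal h.2, Set.mem_insert_iff,
    Set.mem_singleton_iff]
  exact mulVec_eq_self_and_transpose_mul_self_eq_one_iff_fin_two

theorem aut_E4 (F : Type*) [Field F] [IsAlgClosed F] (hchar : ringChar F ≠ 2) :
    Aut (!![1, 0, 0, 1; 0, 0, 0, 0] : Matrix (Fin 2) (Fin 4) F) =
      {1, !![1, 0; 0, -1]} :=
  aut_E4_general F
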